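/- Fix positive integers a and b. For every ε > 0 there exists N such that for all n ≥ N, the 2-dimension of the divisibility poset on the arithmetic progression a[n] + b = {ak + b : k ∈ {1,…,n}} satisfies (1/16 − ε)·(log n)²/(log log n)² ≤ dim₂(D_{a[n]+b}) ≤ ((4/3)·e·π² + ε)·(log n)²/(log log n). -/

import Mathlib

/-- The 2-dimension of the divisibility poset on a set `S ⊆ ℕ`:
the least `d` such that there is an order embedding of `(S, ∣)` into the
powerset of `{1, …, d}` ordered by inclusion. -/
noncomputable def divDim2 (S : Set ℕ) : ℕ :=
  sInf {d : ℕ | ∃ f : ℕ → Finset (Fin d), ∀ a ∈ S, ∀ b ∈ S, (f a ⊆ f b ↔ a ∣ b)}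

/-!
Upper bound: mapping `m` to the set of prime powers dividing it turns divisibility into inclusion.
For `m ≤ M`, the powers of primes `p ≤ y = (log M) ^ θ`, with `θ` close to `1`, are few enough to be
used as they are. Of the remaining ones each `m ≤ M` has at most `k = log M / log y` as divisors. In
a uniformly random colouring of the prime powers with `k + 1` colours, a given colour is assigned to
a given `q` and to no large prime power divisor of a given `m` with probability at least
`1 / (e (k + 1))`; hence about `2 e (k + 1) log M` random colour classes separate all such `q ∤ m`,
and recording which classes meet the divisors of `m` replaces the large prime powers.

Lower bound: let `w p` be a multiple of the prime `p > a` by a factor at most `a` which is congruent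
to `1` modulo `a`. Then `(a + b) * ∏ p ∈ R, w p` is in the progression for every set `R` of at most
`r ~ log n / (2 log log n)` primes up to `(log n) ^ 2`. An embedding sends it to a set that contains
the images of the `(a + b) * w p` with `p ∈ R` and of no other one, so these images form an
`r`-cover-free family, and such a family occupies at least about `r ^ 2 / 2` points.
-/

open Finset Filter

/-- `f` represents the divisibility order on `S` by inclusion of finite sets; the embeddings
considered in `divDim2` are those with values in `Finset (Fin d)`. -/
def IsDivEmbedding {α : Type*} (S : Set ℕ) (f : ℕ → Finset α) : Prop :=
  ∀ u ∈ S, ∀ v ∈ S, (f u ⊆ f v ↔ u ∣ v)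

namespace IsDivEmbedding

variable {α : Type*} {S : Set ℕ} {f : ℕ → Finset α}

lemma exists_fin (hf : IsDivEmbedding S f) {T : Finset α} (hT : ∀ u ∈ S, f u ⊆ T) :
    ∃ g : ℕ → Finset (Fin #T), IsDivEmbedding S g := by
  classical
  refine ⟨fun u ↦ ((f u).subtype (· ∈ T)).map T.equivFin.toEmbedding, fun u hu v hv ↦ ?_⟩
  rw [map_subset_map, ← hf u hu v hv]
  refine ⟨fun h x hx ↦ ?_, fun h ↦ subtype_mono h⟩
  exact mem_subtype.mp (h (mem_subtype (a := ⟨x, hT u hu hx⟩) |>.mpr hx))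

lemma divDim2_le_card (hf : IsDivEmbedding S f) {T : Finset α} (hT : ∀ u ∈ S, f u ⊆ T) :
    divDim2 S ≤ #T :=
  Nat.sInf_le (hf.exists_fin hT)

end IsDivEmbedding

lemma exists_isDivEmbedding_divDim2 {S : Set ℕ} (hS : S.Finite) :
    ∃ f : ℕ → Finset (Fin (divDim2 S)), IsDivEmbedding S f := by
  have divisors_embedding : IsDivEmbedding S fun u ↦ {m ∈ hS.toFinset | m ∣ u} := by
    intro u hu v _
    refine ⟨fun h ↦ ?_, fun h m ↦ ?_⟩
    · exact (mem_filter.mp (h (mem_filter.mpr ⟨hS.mem_toFinset.mpr hu, dvd_rfl⟩))).2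
    · simp only [mem_filter]
      exact And.imp_right fun hm ↦ hm.trans h
  exact Nat.sInf_mem (s := {d | ∃ f : ℕ → Finset (Fin d), IsDivEmbedding S f})
    ⟨_, divisors_embedding.exists_fin fun u _ ↦ filter_subset _ _⟩

lemma exists_hitting_tuple {ι Ω : Type*} [Fintype Ω] [Nonempty Ω] {I : Finset ι}
    {G : ι → Finset Ω} {δ : ℝ} {d : ℕ} (hG : ∀ i ∈ I, δ * Fintype.card Ω ≤ #(G i))
    (hd : #I * (1 - δ) ^ d < 1) : ∃ w : Fin d → Ω, ∀ i ∈ I, ∃ t, w t ∈ G i := by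
  classical
  by_contra! hmiss
  have hcover : (univ : Finset (Fin d → Ω)) ⊆
      I.biUnion fun i ↦ Fintype.piFinset fun _ ↦ (G i)ᶜ := by
    intro w _
    obtain ⟨i, hi, hw⟩ := hmiss w
    exact mem_biUnion.mpr ⟨i, hi, Fintype.mem_piFinset.mpr fun t ↦ mem_compl.mpr (hw t)⟩
  have hcount : Fintype.card Ω ^ d ≤ ∑ i ∈ I, #(G i)ᶜ ^ d := by
    simpa using (card_le_card hcover).trans card_biUnion_le
  have hcompl : ∀ i ∈ I, (#(G i)ᶜ : ℝ) ≤ (1 - δ) * Fintype.card Ω := by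
    intro i hi
    rw [card_compl, Nat.cast_sub (card_le_univ _)]
    linarith [hG i hi]
  refine lt_irrefl ((Fintype.card Ω : ℝ) ^ d) ?_
  calc (Fintype.card Ω : ℝ) ^ d ≤ ∑ i ∈ I, (#(G i)ᶜ : ℝ) ^ d := by exact_mod_cast hcount
    _ ≤ ∑ _i ∈ I, ((1 - δ) * Fintype.card Ω) ^ d := by
        gcongr with i hi
        exact hcompl i hi
    _ = #I * (1 - δ) ^ d * (Fintype.card Ω : ℝ) ^ d := by
        rw [sum_const, nsmul_eq_mul, mul_pow, mul_assoc]
    _ < (Fintype.card Ω : ℝ) ^ d := mul_lt_of_lt_one_left (by positivity) hd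

lemma exp_neg_one_le_div_add_one_pow (k : ℕ) : Real.exp (-1) ≤ ((k : ℝ) / (k + 1)) ^ k := by
  rcases eq_or_ne k 0 with rfl | hk
  · simp
  · have hinv : ((k : ℝ) / (k + 1)) = (1 + (k : ℝ)⁻¹)⁻¹ := by field_simp
    rw [hinv, inv_pow, Real.exp_neg]
    exact inv_anti₀ (by positivity) Real.one_add_inv_pow_le_exp

lemma card_colorings_isolating_ge {α : Type*} [Fintype α] [DecidableEq α] {k : ℕ} {F : Finset α}
    (hF : #F ≤ k) {q : α} (hq : q ∉ F) :
    (Real.exp 1 * (k + 1))⁻¹ * Fintype.card (α → Fin (k + 1)) ≤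
      #{g : α → Fin (k + 1) | g q = 0 ∧ ∀ x ∈ F, g x ≠ 0} := by
  set s : α → Finset (Fin (k + 1)) := fun x ↦ if x = q then {0} else if x ∈ F then {0}ᶜ else univ
    with hs
  have hpi : Fintype.piFinset s ⊆
      ({g | g q = 0 ∧ ∀ x ∈ F, g x ≠ 0} : Finset (α → Fin (k + 1))) := by
    intro g hg
    rw [Fintype.mem_piFinset] at hg
    refine mem_filter.mpr ⟨mem_univ g, by simpa [hs] using hg q, fun x hx ↦ ?_⟩
    simpa [hs, ne_of_mem_of_not_mem hx hq, hx] using hg x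
  have hcard (x : α) : (#(s x) : ℝ) = (k + 1) * ((if x = q then ((k : ℝ) + 1)⁻¹ else 1) *
      (if x ∈ F then (k : ℝ) / (k + 1) else 1)) := by
    by_cases hxq : x = q
    · simp [hs, hxq, hq, Nat.cast_add_one_ne_zero k]
    · by_cases hxF : x ∈ F
      · simp [hs, hxq, hxF, card_compl, mul_div_cancel₀ _ (Nat.cast_add_one_ne_zero (R := ℝ) k)]
      · simp [hs, hxq, hxF]
  calc (Real.exp 1 * (k + 1))⁻¹ * (Fintype.card (α → Fin (k + 1)) : ℝ)
      = (k + 1) ^ Fintype.card α * (((k : ℝ) + 1)⁻¹ * Real.exp (-1)) := by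
        rw [Fintype.card_fun, Fintype.card_fin, Real.exp_neg, mul_inv]
        push_cast
        ring
    _ ≤ (k + 1) ^ Fintype.card α * (((k : ℝ) + 1)⁻¹ * ((k : ℝ) / (k + 1)) ^ #F) := by
        gcongr
        refine (exp_neg_one_le_div_add_one_pow k).trans (pow_le_pow_of_le_one (by positivity) ?_ hF)
        exact div_le_one_of_le₀ (by linarith) (by positivity)
    _ = #(Fintype.piFinset s) := by
        rw [Fintype.card_piFinset, Nat.cast_prod, prod_congr rfl fun x _ ↦ hcard x,
          prod_mul_distrib, prod_mul_distrib, prod_const, card_univ, prod_ite_eq']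
        simp only [mem_univ, if_true, prod_ite_mem, univ_inter, prod_const]
    _ ≤ _ := by exact_mod_cast card_le_card hpi

lemma mul_one_sub_inv_pow_lt_one {N : ℕ} {c : ℝ} {d : ℕ} (hc : 1 ≤ c)
    (hd : Real.log N * c < d) : N * (1 - c⁻¹) ^ d < 1 := by
  rcases N.eq_zero_or_pos with rfl | hN
  · simp
  have hc0 : 0 < c := by linarith
  have hN0 : (0 : ℝ) < N := by exact_mod_cast hN
  calc N * (1 - c⁻¹) ^ d ≤ N * Real.exp (-c⁻¹) ^ d := by
        gcongr
        · exact sub_nonneg.mpr (inv_le_one_of_one_le₀ hc)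
        · exact Real.one_sub_le_exp_neg _
    _ = Real.exp (Real.log N - d / c) := by
        rw [← Real.exp_nat_mul, Real.exp_sub, Real.exp_log hN0, mul_neg, Real.exp_neg]
        ring_nf
    _ < 1 := by
        rw [Real.exp_lt_one_iff, sub_neg]
        exact (lt_div_iff₀ hc0).mpr hd

lemma exists_separating_sets {α ι : Type*} {X : Finset α} {I : Finset ι} {F : ι → Finset α}
    {k d : ℕ} (hF : ∀ i ∈ I, #(F i) ≤ k)
    (hd : Real.log (#I * #X : ℕ) * (Real.exp 1 * (k + 1)) < d) :
    ∃ A : Fin d → Finset α, ∀ i ∈ I, ∀ q ∈ X, q ∉ F i → ∃ t, q ∈ A t ∧ Disjoint (A t) (F i) := by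
  classical
  have hF' : ∀ i ∈ I, #((F i).subtype (· ∈ X)) ≤ k := fun i hi ↦ by
    rw [card_subtype]
    exact (card_filter_le _ _).trans (hF i hi)
  obtain ⟨g, hg⟩ := exists_hitting_tuple (d := d) (δ := (Real.exp 1 * (k + 1))⁻¹)
    (I := {p ∈ I ×ˢ X.attach | p.2.1 ∉ F p.1})
    (G := fun p ↦ {g : X → Fin (k + 1) | g p.2 = 0 ∧ ∀ x ∈ (F p.1).subtype (· ∈ X), g x ≠ 0})
    (fun p hp ↦ by
      obtain ⟨hpI, hpF⟩ := mem_filter.mp hp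
      exact card_colorings_isolating_ge (hF' _ (mem_product.mp hpI).1) (by simpa using hpF))
    (by
      have hc : 1 ≤ Real.exp 1 * (k + 1) :=
        one_le_mul_of_one_le_of_one_le (Real.one_le_exp zero_le_one) (by simp)
      refine lt_of_le_of_lt ?_ (mul_one_sub_inv_pow_lt_one hc hd)
      have : (1 - (Real.exp 1 * (k + 1))⁻¹) ≥ 0 := sub_nonneg.mpr (inv_le_one_of_one_le₀ hc)
      gcongr
      simpa using card_filter_le (I ×ˢ X.attach) fun p ↦ p.2.1 ∉ F p.1)
  refine ⟨fun t ↦ ({x | g t x = 0} : Finset X).map (Function.Embedding.subtype _),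
    fun i hi q hqX hqF ↦ ?_⟩
  obtain ⟨t, ht⟩ := hg (i, ⟨q, hqX⟩) (by simp [hi, hqF])
  obtain ⟨hq0, havoid⟩ := (mem_filter.mp ht).2
  refine ⟨t, by simp [hqX, hq0], disjoint_left.mpr fun x hxA hxF ↦ ?_⟩
  obtain ⟨y, hy, rfl⟩ := mem_map.mp hxA
  exact havoid y (mem_subtype.mpr hxF) (mem_filter.mp hy).2

theorem exists_fin_subset_iff_subset {α ι : Type*} {X : Finset α} {I : Finset ι}
    {F : ι → Finset α} {k d : ℕ} (hFX : ∀ i ∈ I, F i ⊆ X) (hF : ∀ i ∈ I, #(F i) ≤ k)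
    (hd : Real.log (#I * #X : ℕ) * (Real.exp 1 * (k + 1)) < d) :
    ∃ φ : ι → Finset (Fin d), ∀ i ∈ I, ∀ j ∈ I, (φ i ⊆ φ j ↔ F i ⊆ F j) := by
  classical
  obtain ⟨A, hA⟩ := exists_separating_sets hF hd
  refine ⟨fun i ↦ {t | ¬ Disjoint (A t) (F i)}, fun i hi j hj ↦ ⟨fun h q hqi ↦ ?_, fun h t ↦ ?_⟩⟩
  · by_contra hqj
    obtain ⟨t, hqt, hdisj⟩ := hA j hj q (hFX i hi hqi) hqj
    have hmeet : ¬ Disjoint (A t) (F i) := fun hd ↦ disjoint_left.mp hd hqt hqi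
    exact (mem_filter.mp (h (mem_filter.mpr ⟨mem_univ t, hmeet⟩))).2 hdisj
  · simp only [mem_filter, mem_univ, true_and]
    exact mt fun hd ↦ hd.mono_right h

/-! ### Prime power divisors -/

/-- The prime powers dividing `m`, which determine `m` and its multiples by inclusion. -/
noncomputable def primePowDivisors (m : ℕ) : Finset ℕ := by
  classical exact {q ∈ m.divisors | IsPrimePow q}

lemma mem_primePowDivisors {q m : ℕ} (hm : m ≠ 0) :
    q ∈ primePowDivisors m ↔ q ∣ m ∧ IsPrimePow q := by
  simp [primePowDivisors, hm]

lemma primePowDivisors_subset_iff {u v : ℕ} (hu : u ≠ 0) (hv : v ≠ 0) :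
    primePowDivisors u ⊆ primePowDivisors v ↔ u ∣ v := by
  refine ⟨fun h ↦ (Nat.dvd_iff_prime_pow_dvd_dvd v u).mpr fun p j hp hpu ↦ ?_, fun h q hq ↦ ?_⟩
  · rcases eq_or_ne j 0 with rfl | hj
    · simp
    · have hpow : p ^ j ∈ primePowDivisors u :=
        (mem_primePowDivisors hu).mpr ⟨hpu, hp.isPrimePow.pow hj⟩
      exact ((mem_primePowDivisors hv).mp (h hpow)).1
  · rw [mem_primePowDivisors hu] at hq
    exact (mem_primePowDivisors hv).mpr ⟨hq.1.trans h, hq.2⟩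

lemma primePowDivisors_subset_Icc {m M : ℕ} (hm : m ∈ Set.Icc 1 M) :
    primePowDivisors m ⊆ Icc 1 M := by
  intro q hq
  obtain ⟨hqm, hq⟩ := (mem_primePowDivisors (Nat.one_le_iff_ne_zero.mp hm.1)).mp hq
  exact mem_Icc.mpr ⟨hq.pos, (Nat.le_of_dvd hm.1 hqm).trans hm.2⟩

-- `∑ Λ(q) = log m` over `q ∣ m`, and each prime power counted here contributes `log q.minFac`.
lemma card_primePowDivisors_lt_minFac_mul_log_le (m y : ℕ) :
    #{q ∈ primePowDivisors m | y < q.minFac} * Real.log (y + 1) ≤ Real.log m := by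
  classical
  rw [← nsmul_eq_mul, ← ArithmeticFunction.vonMangoldt_sum]
  refine (card_nsmul_le_sum _ _ _ fun q hq ↦ ?_).trans (sum_le_sum_of_subset_of_nonneg
    ((filter_subset _ _).trans (filter_subset _ _))
    fun _ _ _ ↦ ArithmeticFunction.vonMangoldt_nonneg)
  obtain ⟨hqm, hyq⟩ := mem_filter.mp hq
  rw [ArithmeticFunction.vonMangoldt_apply, if_pos (mem_filter.mp hqm).2]
  exact Real.log_le_log (by positivity) (by exact_mod_cast hyq)

lemma card_primePow_minFac_le (M y : ℕ) [DecidablePred (IsPrimePow : ℕ → Prop)] :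
    #{q ∈ Icc 1 M | IsPrimePow q ∧ q.minFac ≤ y} ≤ y * Nat.log 2 M := by
  have himage : {q ∈ Icc 1 M | IsPrimePow q ∧ q.minFac ≤ y} ⊆
      (Icc 1 y ×ˢ Icc 1 (Nat.log 2 M)).image fun p ↦ p.1 ^ p.2 := by
    intro q hq
    simp only [mem_filter, mem_Icc] at hq
    obtain ⟨⟨-, hqM⟩, hqpow, hqy⟩ := hq
    obtain ⟨p, j, hp, hj, rfl⟩ := (isPrimePow_nat_iff q).mp hqpow
    rw [hp.pow_minFac hj.ne'] at hqy
    have hjM : j ≤ Nat.log 2 M :=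
      Nat.le_log_of_pow_le one_lt_two ((Nat.pow_le_pow_left hp.two_le j).trans hqM)
    have hpj : (p, j) ∈ Icc 1 y ×ˢ Icc 1 (Nat.log 2 M) := by
      simp [hp.one_le, hqy, Nat.one_le_iff_ne_zero.mpr hj.ne', hjM]
    exact mem_image_of_mem (fun p : ℕ × ℕ ↦ p.1 ^ p.2) hpj
  simpa using (card_le_card himage).trans card_image_le

lemma exists_fin_large_primePowDivisors_subset_iff {M y d : ℕ} (hy : 1 ≤ y)
    (hd : 2 * Real.log M * (Real.exp 1 * (Real.log M / Real.log (y + 1) + 1)) < d) :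
    ∃ φ : ℕ → Finset (Fin d), ∀ u ∈ Icc 1 M, ∀ v ∈ Icc 1 M, (φ u ⊆ φ v ↔
      {q ∈ primePowDivisors u | y < q.minFac} ⊆ {q ∈ primePowDivisors v | y < q.minFac}) := by
  have hlog : 0 < Real.log (y + 1) := Real.log_pos (by norm_cast; omega)
  refine exists_fin_subset_iff_subset (k := ⌊Real.log M / Real.log (y + 1)⌋₊)
    (fun m hm ↦ (filter_subset _ _).trans (primePowDivisors_subset_Icc (by simpa using hm)))
    (fun m hm ↦ ?_) (lt_of_le_of_lt ?_ hd)
  · obtain ⟨hm1, hmM⟩ := mem_Icc.mp hm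
    refine Nat.le_floor ((le_div_iff₀ hlog).mpr ?_)
    exact (card_primePowDivisors_lt_minFac_mul_log_le m y).trans
      (Real.log_le_log (by exact_mod_cast hm1) (by exact_mod_cast hmM))
  · rw [Nat.card_Icc, Nat.add_sub_cancel, Nat.cast_mul, ← sq, Real.log_pow]
    gcongr
    · rfl
    · exact Nat.floor_le (by positivity)

theorem divDim2_le_of_subset_Icc {S : Set ℕ} {M y d : ℕ} (hS : S ⊆ Set.Icc 1 M) (hy : 1 ≤ y)
    (hd : 2 * Real.log M * (Real.exp 1 * (Real.log M / Real.log (y + 1) + 1)) < d) :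
    divDim2 S ≤ y * Nat.log 2 M + d := by
  classical
  obtain ⟨φ, hφ⟩ := exists_fin_large_primePowDivisors_subset_iff hy hd
  set small : ℕ → Finset ℕ := fun m ↦ {q ∈ primePowDivisors m | q.minFac ≤ y} with hsmall
  have hembed : IsDivEmbedding S fun m ↦ (small m).disjSum (φ m) := by
    intro u hu v hv
    rw [disjSum_subset, toLeft_disjSum, toRight_disjSum,
      hφ u (by simpa using hS hu) v (by simpa using hS hv),
      ← primePowDivisors_subset_iff (Nat.one_le_iff_ne_zero.mp (hS hu).1)
        (Nat.one_le_iff_ne_zero.mp (hS hv).1)]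
    simp only [hsmall, subset_iff, mem_filter]
    grind
  have hground : ∀ m ∈ S, (small m).disjSum (φ m) ⊆
      ({q ∈ Icc 1 M | IsPrimePow q ∧ q.minFac ≤ y} : Finset ℕ).disjSum univ := by
    refine fun m hm ↦ disjSum_mono (fun q hq ↦ ?_) (subset_univ _)
    obtain ⟨hqm, hqy⟩ := mem_filter.mp hq
    exact mem_filter.mpr
      ⟨primePowDivisors_subset_Icc (hS hm) hqm, (mem_filter.mp hqm).2, hqy⟩
  refine (hembed.divDim2_le_card hground).trans ?_
  rw [card_disjSum, card_univ, Fintype.card_fin]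
  gcongr
  exact card_primePow_minFac_le M y

/-! ### Cover-free families -/

/-- The family `(B i)_{i ∈ I}` is `r`-cover-free: no member is contained in the union of at most
`r` other members. -/
def IsCoverFree {ι γ : Type*} [DecidableEq ι] [DecidableEq γ] (r : ℕ) (I : Finset ι)
    (B : ι → Finset γ) : Prop :=
  ∀ i ∈ I, ∀ R ⊆ I.erase i, #R ≤ r → ¬ B i ⊆ R.biUnion B

namespace IsCoverFree

variable {ι γ : Type*} [DecidableEq ι] [DecidableEq γ] {r : ℕ} {I : Finset ι} {B : ι → Finset γ}

lemma nonempty (h : IsCoverFree r I B) {i : ι} (hi : i ∈ I) : (B i).Nonempty := by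
  refine nonempty_iff_ne_empty.mpr fun hempty ↦ h i hi ∅ (empty_subset _) (by simp) ?_
  simp [hempty]

lemma lt_card_of_forall_mem_other (h : IsCoverFree r I B) {i : ι} (hi : i ∈ I)
    (hother : ∀ x ∈ B i, ∃ j ∈ I.erase i, x ∈ B j) : r < #(B i) := by
  have : Nonempty ι := ⟨i⟩
  choose! ψ hψI hψB using hother
  by_contra! hle
  exact h i hi ((B i).image ψ) (image_subset_iff.mpr hψI) (card_image_le.trans hle)
    fun x hx ↦ mem_biUnion.mpr ⟨ψ x, mem_image_of_mem ψ hx, hψB x hx⟩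

lemma erase_sdiff (h : IsCoverFree (r + 1) I B) {i : ι} (hi : i ∈ I) :
    IsCoverFree r (I.erase i) fun j ↦ B j \ B i := by
  intro j hj R hR hRr hcover
  obtain ⟨hji, hjI⟩ := mem_erase.mp hj
  refine h j hjI (insert i R) ?_ ((card_insert_le _ _).trans (Nat.succ_le_succ hRr)) ?_
  · exact insert_subset (mem_erase.mpr ⟨hji.symm, hi⟩)
      (hR.trans (erase_subset_erase j (erase_subset i I)))
  · rw [biUnion_insert]
    exact sdiff_le_iff.mp (hcover.trans (biUnion_mono fun _ _ ↦ sdiff_subset))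

end IsCoverFree

lemma card_le_card_biUnion_of_private_elements {ι γ : Type*} [DecidableEq γ] {I : Finset ι}
    {B : ι → Finset γ} (h : ∀ i ∈ I, ∃ x ∈ B i, ∀ j ∈ I, x ∈ B j → j = i) :
    #I ≤ #(I.biUnion B) := by
  choose x hxB hx using h
  have hinj : Function.Injective fun i : I ↦ x i i.2 := fun i j hij ↦
    Subtype.ext (hx j j.2 i i.2 (by simpa only [hij] using hxB i i.2))
  rw [← card_attach, ← card_image_of_injective _ hinj]
  refine card_le_card (image_subset_iff.mpr fun i _ ↦ ?_)
  exact mem_biUnion.mpr ⟨i, i.2, hxB i i.2⟩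

lemma card_biUnion_eq_card_add_card_biUnion_sdiff {ι γ : Type*} [DecidableEq ι] [DecidableEq γ]
    {I : Finset ι} (B : ι → Finset γ) {i : ι} (hi : i ∈ I) :
    #(I.biUnion B) = #(B i) + #((I.erase i).biUnion fun j ↦ B j \ B i) := by
  have hsdiff : (I.erase i).biUnion (fun j ↦ B j \ B i) = I.biUnion B \ B i := by
    ext x
    simp only [mem_biUnion, mem_erase]
    grind
  rw [hsdiff, ← card_sdiff_add_card_eq_card (subset_biUnion_of_mem B hi), add_comm]

-- A member without a private element is covered by one further member per element, so it has more
-- than `r` elements; delete these elements from the remaining members and induct.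
theorem IsCoverFree.min_card_choose_le_card_biUnion {ι γ : Type*} [DecidableEq ι] [DecidableEq γ]
    {r : ℕ} {I : Finset ι} {B : ι → Finset γ} (h : IsCoverFree r I B) :
    min #I ((r + 2).choose 2) ≤ #(I.biUnion B) := by
  induction r generalizing I B with
  | zero =>
    rcases I.eq_empty_or_nonempty with rfl | ⟨i, hi⟩
    · simp
    · refine (min_le_right _ _).trans (card_pos.mpr ?_)
      exact (h.nonempty hi).mono (subset_biUnion_of_mem B hi)
  | succ r ih =>
    by_cases hprivate : ∀ i ∈ I, ∃ x ∈ B i, ∀ j ∈ I, x ∈ B j → j = i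
    · exact (min_le_left _ _).trans (card_le_card_biUnion_of_private_elements hprivate)
    · push Not at hprivate
      obtain ⟨i, hi, hother⟩ := hprivate
      have hlarge : r + 2 ≤ #(B i) := h.lt_card_of_forall_mem_other hi fun x hx ↦ by
        obtain ⟨j, hj, hxj, hji⟩ := hother x hx
        exact ⟨j, mem_erase.mpr ⟨hji, hj⟩, hxj⟩
      have hrest := ih (h.erase_sdiff hi)
      have hchoose : (r + 3).choose 2 = (r + 2) + (r + 2).choose 2 := by
        rw [Nat.choose_succ_succ' (r + 2) 1, Nat.choose_one_right]
      rw [card_erase_of_mem hi] at hrest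
      rw [card_biUnion_eq_card_add_card_biUnion_sdiff B hi, hchoose]
      omega

theorem min_card_choose_le_divDim2 {ι : Type*} [DecidableEq ι] {S : Set ℕ} (hS : S.Finite)
    {r : ℕ} {I : Finset ι} {w : ι → ℕ} (hw : ∀ i ∈ I, w i ∈ S)
    (hsep : ∀ i ∈ I, ∀ R ⊆ I.erase i, #R ≤ r → ∃ v ∈ S, (∀ j ∈ R, w j ∣ v) ∧ ¬ w i ∣ v) :
    min #I ((r + 2).choose 2) ≤ divDim2 S := by
  obtain ⟨f, hf⟩ := exists_isDivEmbedding_divDim2 hS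
  have hfree : IsCoverFree r I fun i ↦ f (w i) := by
    intro i hi R hR hRr hcover
    obtain ⟨v, hv, hRv, hiv⟩ := hsep i hi R hR hRr
    refine hiv ((hf _ (hw i hi) v hv).mp (hcover.trans (biUnion_subset.mpr fun j hj ↦ ?_)))
    exact (hf _ (hw j (mem_of_mem_erase (hR hj))) v hv).mpr (hRv j hj)
  simpa using hfree.min_card_choose_le_card_biUnion.trans (card_le_univ _)

/-! ### Products of primes in an arithmetic progression -/

/-- The arithmetic progression `a[n] + b`. -/
def arithProg (a b n : ℕ) : Set ℕ :=
  {m : ℕ | ∃ k : ℕ, 1 ≤ k ∧ k ≤ n ∧ m = a * k + b}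

lemma arithProg_subset_Icc {a : ℕ} (ha : 1 ≤ a) (b n : ℕ) :
    arithProg a b n ⊆ Set.Icc 1 (a * n + b) := by
  rintro m ⟨k, hk, hkn, rfl⟩
  exact ⟨Nat.le_add_right_of_le (Nat.mul_pos ha hk), by gcongr⟩

lemma mul_mem_arithProg {a b n w : ℕ} (ha : 1 ≤ a) (hw : w ≡ 1 [MOD a]) (hw0 : 1 ≤ w)
    (hn : (a + b) * w ≤ n) : (a + b) * w ∈ arithProg a b n := by
  obtain ⟨j, hj⟩ := (Nat.modEq_iff_dvd' hw0).mp hw.symm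
  obtain rfl : w = 1 + a * j := by omega
  have hexpand : (a + b) * (1 + a * j) = a * (1 + a * j + b * j) + b := by ring
  refine ⟨1 + a * j + b * j, by omega, le_trans ?_ hn, hexpand⟩
  rw [hexpand]
  exact Nat.le_add_right_of_le (Nat.le_mul_of_pos_left _ ha)

lemma mul_prod_mem_arithProg {ι : Type*} {a b n X r : ℕ} (ha : 1 ≤ a) (hX : 1 ≤ X)
    (hn : (a + b) * X ^ r ≤ n) {R : Finset ι} (hR : #R ≤ r) {w : ι → ℕ}
    (hw : ∀ i ∈ R, w i ≡ 1 [MOD a]) (hw0 : ∀ i ∈ R, 1 ≤ w i) (hwX : ∀ i ∈ R, w i ≤ X) :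
    (a + b) * ∏ i ∈ R, w i ∈ arithProg a b n := by
  refine mul_mem_arithProg ha ?_ (Nat.succ_le_of_lt (prod_pos hw0)) (le_trans ?_ hn)
  · exact Nat.ModEq.prod_one hw
  · gcongr
    exact (prod_le_pow_card R w X hwX).trans (Nat.pow_le_pow_right hX hR)

lemma exists_mul_modEq_one {a p : ℕ} (ha : 1 ≤ a) (hp : p.Coprime a) :
    ∃ z, 1 ≤ z ∧ z ≤ a ∧ p * z ≡ 1 [MOD a] := by
  rcases Nat.eq_or_lt_of_le ha with rfl | ha
  · exact ⟨1, le_rfl, le_rfl, Nat.modEq_one⟩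
  · obtain ⟨z, hz, hpz⟩ := Nat.exists_mul_mod_eq_one_of_coprime hp ha
    refine ⟨z, Nat.one_le_iff_ne_zero.mpr ?_, hz.le, by rw [Nat.ModEq, hpz, Nat.mod_eq_of_lt ha]⟩
    rintro rfl
    simp at hpz

lemma not_dvd_prod_mul_of_prime {p : ℕ} {R : Finset ℕ} {z : ℕ → ℕ} (hp : p.Prime)
    (hR : ∀ q ∈ R, q.Prime ∧ q ≠ p) (hz : ∀ q ∈ R, 1 ≤ z q ∧ z q < p) :
    ¬ p ∣ ∏ q ∈ R, q * z q := by
  rw [hp.prime.dvd_finsetProd_iff]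
  rintro ⟨q, hq, hpq⟩
  rcases hp.dvd_mul.mp hpq with h | h
  · exact (hR q hq).2 ((Nat.prime_dvd_prime_iff_eq hp (hR q hq).1).mp h).symm
  · exact Nat.not_dvd_of_pos_of_lt (hz q hq).1 (hz q hq).2 h

theorem min_card_choose_le_divDim2_arithProg {a b n x r : ℕ} (ha : 1 ≤ a) (hr : 1 ≤ r)
    (hn : (a + b) * (a * x) ^ r ≤ n) {I : Finset ℕ} (hI : ∀ p ∈ I, p.Prime ∧ a < p ∧ p ≤ x) :
    min #I ((r + 2).choose 2) ≤ divDim2 (arithProg a b n) := by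
  rcases I.eq_empty_or_nonempty with rfl | ⟨p₀, hp₀⟩
  · simp
  have hx : 1 ≤ x := (hI p₀ hp₀).1.one_le.trans (hI p₀ hp₀).2.2
  have hinverse : ∀ p ∈ I, ∃ z, 1 ≤ z ∧ z ≤ a ∧ p * z ≡ 1 [MOD a] := fun p hp ↦ by
    obtain ⟨hprime, hap, -⟩ := hI p hp
    exact exists_mul_modEq_one ha (Nat.coprime_of_lt_prime (by omega) hap hprime)
  choose! z hz0 hza hz using hinverse
  have hprod_mem : ∀ R ⊆ I, #R ≤ r → (a + b) * ∏ p ∈ R, p * z p ∈ arithProg a b n :=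
    fun R hRI hRr ↦ mul_prod_mem_arithProg ha (Nat.mul_pos ha hx) hn hRr
      (fun p hp ↦ hz p (hRI hp))
      (fun p hp ↦ Nat.mul_pos (hI p (hRI hp)).1.pos (hz0 p (hRI hp)))
      (fun p hp ↦ (Nat.mul_le_mul (hI p (hRI hp)).2.2 (hza p (hRI hp))).trans_eq (mul_comm x a))
  refine min_card_choose_le_divDim2 (w := fun p ↦ (a + b) * (p * z p))
    ((Set.finite_Icc _ _).subset (arithProg_subset_Icc ha b n)) (fun p hp ↦ ?_)
    fun p hp R hR hRr ↦ ?_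
  · simpa using hprod_mem {p} (by simpa using hp) (by simpa using hr)
  · have hRI : R ⊆ I := hR.trans (erase_subset p I)
    refine ⟨_, hprod_mem R hRI hRr, fun q hq ↦ ?_, fun hdvd ↦ ?_⟩
    · exact Nat.mul_dvd_mul_left _ (dvd_prod_of_mem (fun q ↦ q * z q) hq)
    · refine not_dvd_prod_mul_of_prime (hI p hp).1 (fun q hq ↦ ?_) (fun q hq ↦ ?_)
        (dvd_of_mul_right_dvd (Nat.dvd_of_mul_dvd_mul_left (by omega) hdvd))
      · exact ⟨(hI q (hRI hq)).1, (mem_erase.mp (hR hq)).1⟩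
      · exact ⟨hz0 q (hRI hq), (hza q (hRI hq)).trans_lt (hI p hp).2.1⟩

lemma min_primeCounting_choose_le_divDim2_arithProg {a b n x r : ℕ} (ha : 1 ≤ a) (hr : 1 ≤ r)
    (hn : (a + b) * (a * x) ^ r ≤ n) :
    min (x.primeCounting - a.primeCounting) ((r + 2).choose 2) ≤ divDim2 (arithProg a b n) := by
  refine le_trans ?_ (min_card_choose_le_divDim2_arithProg ha hr hn
    (I := x.primesLE \ a.primesLE) fun p hp ↦ ?_)
  · gcongr
    rw [← Nat.primesLE_card_eq_primeCounting, ← Nat.primesLE_card_eq_primeCounting]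
    exact le_card_sdiff _ _
  · simp only [Finset.mem_sdiff, Nat.mem_primesLE, not_and'] at hp
    exact ⟨hp.1.2, not_le.mp (hp.2 hp.1.2), hp.1.1⟩

/-! ### Asymptotics -/

lemma eventually_mul_log_le (A : ℝ) : ∀ᶠ x : ℝ in atTop, A * Real.log x ≤ x := by
  filter_upwards [(Real.isLittleO_log_id_atTop.const_mul_left A).def one_pos, eventually_ge_atTop 0]
    with x hx hx0
  simpa [abs_of_nonneg hx0] using (le_abs_self _).trans hx

lemma tendsto_log_natCast_atTop : Tendsto (fun n : ℕ ↦ Real.log n) atTop atTop :=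
  Real.tendsto_log_atTop.comp tendsto_natCast_atTop_atTop

lemma eventually_div_sq_log_add_le_primeCounting (A : ℝ) :
    ∀ᶠ x : ℝ in atTop, x / Real.log x ^ 2 + A ≤ ⌊x⌋₊.primeCounting := by
  filter_upwards [eventually_mul_log_le (4 * (A + 2)), eventually_ge_atTop 8,
    Real.tendsto_log_atTop.eventually_ge_atTop 4] with x hlogx hx hlog
  refine le_trans ?_ (Chebyshev.pi_ge' (by linarith))
  have hlog_add_two : Real.log (x + 2) ≤ 2 * Real.log x := by
    rw [← Real.log_rpow (by linarith), Real.rpow_two]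
    exact Real.log_le_log (by linarith) (by nlinarith)
  have hlog0 : 0 < Real.log x := by linarith
  rw [le_div_iff₀ hlog0]
  calc (x / Real.log x ^ 2 + A) * Real.log x = x / Real.log x + A * Real.log x := by
        field_simp
    _ ≤ x / 4 + A * Real.log x := by gcongr
    _ ≤ (x - 1) * Real.log 2 - Real.log (x + 2) := by nlinarith [Real.log_two_gt_d9]

lemma eventually_mul_pow_floor_le_exp {A B θ : ℝ} (hA : 0 < A) (hB : 0 < B) (hθ0 : 0 < θ)
    (hθ : θ < 1 / 2) :
    ∀ᶠ l : ℝ in atTop, A * (B * l ^ 2) ^ ⌊θ * l / Real.log l⌋₊ ≤ Real.exp l := by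
  obtain ⟨s, hs2, hsθ⟩ := exists_between ((lt_one_div (by norm_num) hθ0).mpr hθ)
  have hθs : 0 < 1 - θ * s := sub_pos.mpr (by rwa [mul_comm, ← lt_div_iff₀ hθ0])
  filter_upwards [eventually_gt_atTop 1, eventually_ge_atTop (Real.log A / (1 - θ * s)),
    Real.tendsto_log_atTop.eventually_ge_atTop (Real.log B / (s - 2))] with l hl hlA hlB
  rw [div_le_iff₀ (by linarith)] at hlA hlB
  have hlog : 0 < Real.log l := Real.log_pos hl
  have : 0 < l := by linarith
  rw [← Real.log_le_iff_le_exp (by positivity), Real.log_mul (by positivity) (by positivity),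
    Real.log_pow, Real.log_mul (by positivity) (by positivity), Real.log_pow]
  have : 0 < s := by linarith
  calc Real.log A + ⌊θ * l / Real.log l⌋₊ * (Real.log B + (2 : ℕ) * Real.log l)
      ≤ l * (1 - θ * s) + ⌊θ * l / Real.log l⌋₊ * (s * Real.log l) := by
        gcongr
        push_cast
        linarith
    _ ≤ l * (1 - θ * s) + θ * l / Real.log l * (s * Real.log l) := by
        gcongr
        exact Nat.floor_le (by positivity)
    _ = l := by
        field_simp
        ring

lemma sq_div_two_le_choose_floor (z : ℝ) (hz : 0 ≤ z) :
    z ^ 2 / 2 ≤ (⌊z⌋₊ + 2).choose 2 := by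
  rw [Nat.cast_choose_two]
  push_cast
  nlinarith [Nat.lt_floor_add_one z]

theorem eventually_le_divDim2_arithProg {a : ℕ} (ha : 1 ≤ a) (b : ℕ) {θ : ℝ} (hθ0 : 0 < θ)
    (hθ : θ < 1 / 2) : ∀ᶠ n : ℕ in atTop,
      θ ^ 2 / 2 * Real.log n ^ 2 / Real.log (Real.log n) ^ 2 ≤ divDim2 (arithProg a b n) := by
  have ha0 : (0 : ℝ) < a := by exact_mod_cast ha
  filter_upwards [eventually_gt_atTop 0, tendsto_log_natCast_atTop.eventually_gt_atTop 1,
    tendsto_log_natCast_atTop.eventually (eventually_mul_log_le θ⁻¹),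
    tendsto_log_natCast_atTop.eventually
      (eventually_mul_pow_floor_le_exp (A := a + b) (by positivity) ha0 hθ0 hθ),
    ((tendsto_pow_atTop two_ne_zero).comp tendsto_log_natCast_atTop).eventually
      (eventually_div_sq_log_add_le_primeCounting a.primeCounting)] with n hn hl hr hsize hprimes
  set l := Real.log n
  set x := ⌊l ^ 2⌋₊
  set r := ⌊θ * l / Real.log l⌋₊
  have ht : 0 < Real.log l := Real.log_pos hl
  have hr1 : 1 ≤ r := Nat.le_floor (by rwa [Nat.cast_one, one_le_div₀ ht, ← inv_mul_le_iff₀ hθ0])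
  have hxr : (a + b) * (a * x) ^ r ≤ n := by
    rw [Real.exp_log (by exact_mod_cast hn)] at hsize
    have hx : (x : ℝ) ≤ l ^ 2 := Nat.floor_le (by positivity)
    have : ((a + b) * (a * x) ^ r : ℝ) ≤ n := le_trans (by gcongr) hsize
    exact_mod_cast this
  refine le_trans ?_
    (Nat.cast_le.mpr (min_primeCounting_choose_le_divDim2_arithProg ha hr1 hxr))
  rw [Nat.cast_min]
  refine le_min ?_ ((sq_div_two_le_choose_floor _ (by positivity)).trans' (le_of_eq (by ring)))
  have hsub : (x.primeCounting : ℝ) ≤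
      (x.primeCounting - a.primeCounting : ℕ) + a.primeCounting := by
    exact_mod_cast le_tsub_add
  simp only [Function.comp_apply, Real.log_pow, Nat.cast_ofNat] at hprimes
  calc θ ^ 2 / 2 * l ^ 2 / Real.log l ^ 2 ≤ (1 / 2) ^ 2 / 1 * l ^ 2 / Real.log l ^ 2 := by
        gcongr
        norm_num
    _ = l ^ 2 / (2 * Real.log l) ^ 2 := by ring
    _ ≤ (x.primeCounting - a.primeCounting : ℕ) := by linarith

lemma divDim2_le_rpow_log_mul_add {S : Set ℕ} {M : ℕ} (hS : S ⊆ Set.Icc 1 M)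
    (hM : 1 < Real.log M) {θ : ℝ} (hθ : 0 < θ) :
    (divDim2 S : ℝ) ≤ Real.log M ^ θ * (Real.log M / Real.log 2) +
      (2 * Real.log M * (Real.exp 1 * (Real.log M / (θ * Real.log (Real.log M)) + 1)) + 1) := by
  set L := Real.log M
  have hlogL : 0 < Real.log L := Real.log_pos hM
  have hL : 0 < L := by linarith
  have hy : 1 ≤ ⌊L ^ θ⌋₊ := Nat.le_floor (by simpa using Real.one_le_rpow hM.le hθ.le)
  have hlogy : θ * Real.log L ≤ Real.log (⌊L ^ θ⌋₊ + 1) := by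
    rw [← Real.log_rpow hL]
    exact Real.log_le_log (by positivity) (Nat.lt_floor_add_one _).le
  set D := 2 * L * (Real.exp 1 * (L / (θ * Real.log L) + 1)) with hDdef
  have hD : 2 * L * (Real.exp 1 * (L / Real.log (⌊L ^ θ⌋₊ + 1) + 1)) < (⌊D⌋₊ + 1 : ℕ) := by
    refine lt_of_le_of_lt ?_ (by exact_mod_cast Nat.lt_floor_add_one D)
    rw [hDdef]
    gcongr
  calc (divDim2 S : ℝ) ≤ ⌊L ^ θ⌋₊ * Nat.log 2 M + (⌊D⌋₊ + 1) := by
        exact_mod_cast divDim2_le_of_subset_Icc hS hy hD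
    _ ≤ L ^ θ * (L / Real.log 2) + (D + 1) := by
        gcongr
        · exact Nat.floor_le (by positivity)
        · exact Real.natLog_le_logb M 2
        · exact Nat.floor_le (by positivity)

lemma eventually_rpow_mul_add_le {θ C : ℝ} (hθ0 : 0 < θ) (hθ1 : θ < 1)
    (hC : 2 * Real.exp 1 / θ < C) :
    ∀ᶠ L : ℝ in atTop, L ^ θ * (L / Real.log 2) +
      (2 * L * (Real.exp 1 * (L / (θ * Real.log L) + 1)) + 1) ≤ C * L ^ 2 / Real.log L := by
  set K := 1 / Real.log 2 + 2 * Real.exp 1 + 1 with hK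
  set δ := C - 2 * Real.exp 1 / θ with hδ
  have hδ0 : 0 < δ := sub_pos.mpr hC
  have hK0 : 0 < K := by positivity
  filter_upwards [eventually_gt_atTop 1,
    (isLittleO_log_rpow_atTop (sub_pos.mpr hθ1)).def (div_pos hδ0 hK0)] with L hL hlog
  have hL0 : 0 < L := by linarith
  have hlogL : 0 < Real.log L := Real.log_pos hL
  have hLθ : 1 ≤ L ^ θ := Real.one_le_rpow hL.le hθ0.le
  rw [Real.norm_of_nonneg hlogL.le, Real.norm_of_nonneg (by positivity), div_mul_eq_mul_div,
    le_div_iff₀ hK0] at hlog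
  have herror : L ^ θ * (L / Real.log 2) + 2 * Real.exp 1 * L + 1 ≤ δ * L ^ 2 / Real.log L := by
    rw [le_div_iff₀ hlogL]
    calc (L ^ θ * (L / Real.log 2) + 2 * Real.exp 1 * L + 1) * Real.log L
        ≤ (L ^ θ * (L / Real.log 2) + 2 * Real.exp 1 * (L ^ θ * L) + L ^ θ * L) * Real.log L := by
          gcongr
          · exact le_mul_of_one_le_left hL0.le hLθ
          · exact one_le_mul_of_one_le_of_one_le hLθ hL.le
      _ = L ^ θ * L * (Real.log L * K) := by
          rw [hK]
          ring
      _ ≤ L ^ θ * L * (δ * L ^ (1 - θ)) := by gcongr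
      _ = δ * L ^ 2 := by
          rw [Real.rpow_sub hL0, Real.rpow_one]
          field_simp
  calc _ = L ^ θ * (L / Real.log 2) + 2 * Real.exp 1 * L + 1 +
        2 * Real.exp 1 / θ * L ^ 2 / Real.log L := by
        field_simp
        ring
    _ ≤ δ * L ^ 2 / Real.log L + 2 * Real.exp 1 / θ * L ^ 2 / Real.log L := by gcongr
    _ = C * L ^ 2 / Real.log L := by
        rw [hδ]
        ring

theorem eventually_divDim2_le_of_subset_Icc {C : ℝ} (hC : 2 * Real.exp 1 < C) :
    ∀ᶠ M : ℕ in atTop, ∀ S ⊆ Set.Icc 1 M,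
      (divDim2 S : ℝ) ≤ C * Real.log M ^ 2 / Real.log (Real.log M) := by
  have hC0 : 0 < C := lt_trans (by positivity) hC
  obtain ⟨θ, hθC, hθ1⟩ := exists_between ((div_lt_one hC0).mpr hC)
  have hθ0 : 0 < θ := lt_trans (by positivity) hθC
  filter_upwards [tendsto_log_natCast_atTop.eventually_gt_atTop 1,
    tendsto_log_natCast_atTop.eventually (eventually_rpow_mul_add_le hθ0 hθ1
      ((div_lt_comm₀ hC0 hθ0).mp hθC))] with M hM hbound S hS
  exact (divDim2_le_rpow_log_mul_add hS hM hθ0).trans hbound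

lemma eventually_sq_log_div_log_log_le {a : ℕ} (ha : 1 ≤ a) (b : ℕ) {s : ℝ} (hs : 1 < s) :
    ∀ᶠ n : ℕ in atTop, Real.log (a * n + b : ℕ) ^ 2 / Real.log (Real.log (a * n + b : ℕ)) ≤
      s * Real.log n ^ 2 / Real.log (Real.log n) := by
  have hsqrt : 0 < √s - 1 := sub_pos.mpr (Real.lt_sqrt_of_sq_lt (by simpa using hs))
  filter_upwards [eventually_ge_atTop 1, tendsto_log_natCast_atTop.eventually_gt_atTop 1,
    tendsto_log_natCast_atTop.eventually_ge_atTop (Real.log (a + b : ℕ) / (√s - 1))]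
    with n hn hlog hlog_add
  rw [div_le_iff₀ hsqrt] at hlog_add
  have hle : Real.log n ≤ Real.log (a * n + b : ℕ) :=
    Real.log_le_log (by positivity) (by exact_mod_cast (by nlinarith : n ≤ a * n + b))
  have hge : Real.log (a * n + b : ℕ) ≤ √s * Real.log n := by
    calc Real.log (a * n + b : ℕ) ≤ Real.log ((a + b : ℕ) * n) :=
          Real.log_le_log (by positivity) (by exact_mod_cast (by nlinarith))
      _ = Real.log (a + b : ℕ) + Real.log n := Real.log_mul (by positivity) (by positivity)
      _ ≤ √s * Real.log n := by linarith
  calc _ ≤ (√s * Real.log n) ^ 2 / Real.log (Real.log n) := by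
        gcongr
        exact Real.log_pos hlog
    _ = s * Real.log n ^ 2 / Real.log (Real.log n) := by
        rw [mul_pow, Real.sq_sqrt (by linarith)]

theorem eventually_divDim2_arithProg_le {a : ℕ} (ha : 1 ≤ a) (b : ℕ) {C : ℝ}
    (hC : 2 * Real.exp 1 < C) : ∀ᶠ n : ℕ in atTop,
      (divDim2 (arithProg a b n) : ℝ) ≤ C * Real.log n ^ 2 / Real.log (Real.log n) := by
  obtain ⟨C', hC', hC'C⟩ := exists_between hC
  have hC'0 : 0 < C' := lt_trans (by positivity) hC'
  have htendsto : Tendsto (fun n : ℕ ↦ a * n + b) atTop atTop :=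
    tendsto_atTop_mono (fun n ↦ Nat.le_add_right_of_le (Nat.le_mul_of_pos_left n ha)) tendsto_id
  filter_upwards [htendsto.eventually (eventually_divDim2_le_of_subset_Icc hC'),
    eventually_sq_log_div_log_log_le ha b ((one_lt_div hC'0).mpr hC'C)] with n hdim hlog
  calc (divDim2 (arithProg a b n) : ℝ)
      ≤ C' * (Real.log (a * n + b : ℕ) ^ 2 / Real.log (Real.log (a * n + b : ℕ))) := by
        rw [← mul_div_assoc]
        exact hdim _ (arithProg_subset_Icc ha b n)
    _ ≤ C' * (C / C' * Real.log n ^ 2 / Real.log (Real.log n)) := by gcongr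
    _ = C * Real.log n ^ 2 / Real.log (Real.log n) := by field_simp

theorem divDim2_arith_prog_bounds_general {a : ℕ} (ha : 1 ≤ a) (b : ℕ) {c C : ℝ} (hc : c < 1 / 8)
    (hC : 2 * Real.exp 1 < C) : ∀ᶠ n : ℕ in atTop,
      c * (Real.log n) ^ 2 / (Real.log (Real.log n)) ^ 2
          ≤ (divDim2 {m : ℕ | ∃ k : ℕ, 1 ≤ k ∧ k ≤ n ∧ m = a * k + b} : ℝ) ∧
        (divDim2 {m : ℕ | ∃ k : ℕ, 1 ≤ k ∧ k ≤ n ∧ m = a * k + b} : ℝ)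
          ≤ C * (Real.log n) ^ 2 / Real.log (Real.log n) := by
  have hsqrt : √(max 0 (2 * c)) < 1 / 2 := by
    rw [Real.sqrt_lt' (by norm_num)]
    exact max_lt (by norm_num) (by linarith)
  obtain ⟨θ, hθc, hθ⟩ := exists_between hsqrt
  have hθ0 : 0 < θ := (Real.sqrt_nonneg _).trans_lt hθc
  have hcθ : 2 * c < θ ^ 2 := (le_max_right _ _).trans_lt ((Real.sqrt_lt' hθ0).mp hθc)
  filter_upwards [eventually_le_divDim2_arithProg ha b hθ0 hθ,
    eventually_divDim2_arithProg_le ha b hC] with n hlower hupper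
  refine ⟨le_trans ?_ hlower, hupper⟩
  gcongr
  linarith

/-- For fixed positive integers `a, b`, for every `ε > 0` and all large `n`,
`(1/16 - ε) (log n)²/(log log n)² ≤ dim₂(D_{a[n]+b})
  ≤ ((4/3) e π² + ε) (log n)²/log log n`. -/
theorem divDim2_arith_prog_bounds (a b : ℕ) (ha : 1 ≤ a) (hb : 1 ≤ b) :
    ∀ ε : ℝ, 0 < ε → ∃ N : ℕ, ∀ n : ℕ, N ≤ n →
      (1 / 16 - ε) * (Real.log n) ^ 2 / (Real.log (Real.log n)) ^ 2
          ≤ (divDim2 {m : ℕ | ∃ k : ℕ, 1 ≤ k ∧ k ≤ n ∧ m = a * k + b} : ℝ) ∧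
        (divDim2 {m : ℕ | ∃ k : ℕ, 1 ≤ k ∧ k ≤ n ∧ m = a * k + b} : ℝ)
          ≤ ((4 / 3) * Real.exp 1 * Real.pi ^ 2 + ε) * (Real.log n) ^ 2
              / Real.log (Real.log n) := by
  have hπ : 2 * Real.exp 1 < 4 / 3 * Real.exp 1 * Real.pi ^ 2 := by
    nlinarith [Real.exp_pos 1, Real.pi_gt_three, mul_pos (Real.exp_pos 1) Real.pi_pos]
  exact fun ε hε ↦ eventually_atTop.mp
    (divDim2_arith_prog_bounds_general ha b (by linarith) (by linarith))
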